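/- arXiv:1610.02566 — 2 statements merged into one kernel-verified Lean document; each statement's English description precedes it below -/
import Mathlib

section
/- Under the energy-harvesting block-transmission model, let γ ∈ [0, Q·r_E] and p̄ = P(Ē_1 ≥ γ·μ_E), and assume p̄ > 0. Then for every r in the interval (0, 1/η_U], the estimation error satisfies P(ε < err_II) ≥ 1 − f_bt(μ_II, ϱ_II, r), where err_II = P_x / (1 + (1/σ_w²)·(1/Q)·p̄·γ·μ_E·(1/η_U − r)), μ_II = (1/η_L)·max{1/p̄ − 1, 1}·min{Q·η_U, 1}, and ϱ_II = (1/η_L²)·(1/p̄ − 1)·min{Q·η_U, 1}. -/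
open Matrix Finset MeasureTheory ProbabilityTheory

/-- Squared Euclidean norm of `u_i`, the conjugate transpose of the `i`-th row of `Us`. -/
noncomputable def rowNormSq {N s : ℕ} (Us : Matrix (Fin N) (Fin s) ℂ) (i : Fin N) : ℝ :=
  ∑ j, ‖Us i j‖ ^ 2

/-- The (0-based) global index `(k−1)·Q + t` of sample `t` of block `k`. -/
def blockIdx (nT Q : ℕ) (k : Fin nT) (t : Fin Q) : Fin (nT * Q) := finProdFinEquiv (k, t)

/-- The block containing global index `i`. -/
def blockOf (nT Q : ℕ) (i : Fin (nT * Q)) : Fin nT := (finProdFinEquiv.symm i).1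

/-- `h(a) = (1+a)·log(1+a) − a`. -/
noncomputable def hfun (a : ℝ) : ℝ := (1 + a) * Real.log (1 + a) - a

/-- `f_bt(μ, ϱ, r) = 2s·exp(−(ϱ/μ²)·h(μ·r/ϱ))`. -/
noncomputable def fbt (s : ℕ) (μ ϱ r : ℝ) : ℝ :=
  2 * s * Real.exp (-(ϱ / μ ^ 2) * hfun (μ * r / ϱ))

section Helpers

open scoped ComplexOrder

section GT
variable {n : Type*} [Fintype n] [DecidableEq n]

lemma aux_amgm (A B : Matrix n n ℂ) :
    2 * (Aᴴ * B).trace.re ≤ (Aᴴ * A).trace.re + (Bᴴ * B).trace.re := by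
  have h : 0 ≤ ((A - B)ᴴ * (A - B)).trace :=
    (Matrix.posSemidef_conjTranspose_mul_self (A - B)).trace_nonneg
  have h1 : 0 ≤ ((A - B)ᴴ * (A - B)).trace.re := (Complex.le_def.1 h).1
  have h2 : (Bᴴ * A).trace.re = (Aᴴ * B).trace.re := by
    have : (Bᴴ * A) = (Aᴴ * B)ᴴ := by simp
    rw [this, Matrix.trace_conjTranspose]; simp
  simp only [conjTranspose_sub, sub_mul, mul_sub, trace_sub, Complex.sub_re] at h1
  linarith

lemma aux_cyc (A B : Matrix n n ℂ) (m : ℕ) : ((A * B) ^ m).trace = ((B * A) ^ m).trace := by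
  cases m with
  | zero => simp
  | succ m =>
    have : ∀ k : ℕ, (A * B) ^ (k + 1) = A * ((B * A) ^ k * B) := by
      intro k
      induction k with
      | zero => simp
      | succ k ih => rw [pow_succ, ih, pow_succ]; simp only [mul_assoc]
    rw [this, trace_mul_comm, pow_succ, mul_assoc]

lemma aux_AB (j : ℕ) :
    (∀ X : Matrix n n ℂ, (X ^ (2 ^ (j + 1))).trace.re ≤ ((Xᴴ * X) ^ (2 ^ j)).trace.re) ∧
    (∀ P Q : Matrix n n ℂ, P.IsHermitian → Q.IsHermitian →
      ((P * Q) ^ (2 ^ j)).trace.re ≤ (P ^ (2 ^ j) * Q ^ (2 ^ j)).trace.re) := by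
  induction j with
  | zero =>
    refine ⟨fun X => ?_, fun P Q _ _ => by simp⟩
    have := aux_amgm Xᴴ X
    have h2 : (Xᴴᴴ * Xᴴ).trace = (Xᴴ * X).trace := by
      rw [conjTranspose_conjTranspose, trace_mul_comm]
    rw [h2] at this
    simp only [conjTranspose_conjTranspose] at this
    simp only [zero_add, pow_one, pow_zero, pow_two]
    linarith
  | succ j ih =>
    obtain ⟨hA, hB⟩ := ih
    constructor
    · intro X
      have h1 := hA (X ^ 2)
      have h2 : ((X ^ 2)ᴴ * X ^ 2) = Xᴴ * (Xᴴ * X * X) := by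
        rw [pow_two, conjTranspose_mul]; simp only [mul_assoc]
      rw [h2, aux_cyc, mul_assoc (Xᴴ * X), ← pow_mul, ← pow_succ'] at h1
      have hP : (Xᴴ * X).IsHermitian := isHermitian_conjTranspose_mul_self X
      have hQ : (X * Xᴴ).IsHermitian := isHermitian_mul_conjTranspose_self X
      have h3 := hB _ _ hP hQ
      have h4 := aux_amgm ((Xᴴ * X) ^ 2 ^ j) ((X * Xᴴ) ^ 2 ^ j)
      rw [conjTranspose_pow, conjTranspose_pow, hP.eq, hQ.eq, ← pow_add, ← pow_add,
        aux_cyc X Xᴴ, ← two_mul (2 ^ j), ← pow_succ'] at h4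
      linarith
    · intro P Q hP hQ
      have h1 := hA (P * Q)
      have h2 : ((P * Q)ᴴ * (P * Q)) = Q * (P ^ 2 * Q) := by
        rw [conjTranspose_mul, hP.eq, hQ.eq, pow_two]; simp only [mul_assoc]
      rw [h2, aux_cyc Q, mul_assoc, ← pow_two] at h1
      have h3 := hB (P ^ 2) (Q ^ 2) (hP.pow 2) (hQ.pow 2)
      rw [← pow_mul, ← pow_mul, ← pow_succ'] at h3
      linarith
end GT

section LT
open NormedSpace Filter Topology
variable {𝔸 : Type*} [NormedRing 𝔸] [NormedAlgebra ℝ 𝔸] [CompleteSpace 𝔸] [NormOneClass 𝔸]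

lemma aux_normexp (x : 𝔸) : ‖exp x‖ ≤ Real.exp ‖x‖ := by
  have hs : Summable fun k : ℕ => ‖x‖ ^ k / (k.factorial : ℝ) := Real.summable_pow_div_factorial _
  rw [exp_eq_tsum ℝ, Real.exp_eq_exp_ℝ, exp_eq_tsum_div]
  refine tsum_of_norm_bounded hs.hasSum fun k => ?_
  rw [norm_smul, norm_inv, div_eq_inv_mul]
  simp only [RCLike.norm_natCast]
  gcongr
  exact norm_pow_le _ _

lemma aux_powsub (S T : 𝔸) (M : ℝ) (hS : ‖S‖ ≤ M) (hT : ‖T‖ ≤ M) (m : ℕ) :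
    ‖S ^ (m + 1) - T ^ (m + 1)‖ ≤ (m + 1) * M ^ m * ‖S - T‖ := by
  have hM : 0 ≤ M := (norm_nonneg _).trans hS
  induction m with
  | zero => simp
  | succ m ih =>
    have : S ^ (m + 1 + 1) - T ^ (m + 1 + 1)
        = (S ^ (m + 1) - T ^ (m + 1)) * S + T ^ (m + 1) * (S - T) := by
      rw [pow_succ S (m+1), pow_succ T (m+1)]; noncomm_ring
    rw [this]
    calc _ ≤ ‖S ^ (m + 1) - T ^ (m + 1)‖ * ‖S‖ + ‖T ^ (m + 1)‖ * ‖S - T‖ :=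
          (norm_add_le _ _).trans (add_le_add (norm_mul_le _ _) (norm_mul_le _ _))
      _ ≤ ((m + 1) * M ^ m * ‖S - T‖) * M + M ^ (m + 1) * ‖S - T‖ := by
          gcongr
          exact (norm_pow_le _ _).trans (by gcongr)
      _ = _ := by push_cast; ring

lemma aux_trotter (a b : 𝔸) :
    Tendsto (fun m : ℕ => (exp (((m : ℝ)+1)⁻¹ • a) * exp (((m : ℝ)+1)⁻¹ • b)) ^ (m + 1)) atTop
      (𝓝 (exp (a + b))) := by
  have hd : HasDerivAt (fun t : ℝ => exp (t • (a + b)) - exp (t • a) * exp (t • b)) 0 0 := by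
    have h1 := hasDerivAt_exp_smul_const (𝕂 := ℝ) (a + b) (0 : ℝ)
    have h2 := hasDerivAt_exp_smul_const (𝕂 := ℝ) a (0 : ℝ)
    have h3 := hasDerivAt_exp_smul_const (𝕂 := ℝ) b (0 : ℝ)
    have := h1.sub (h2.mul h3)
    have e0 : exp ((0:ℝ) • (a + b)) * (a + b) - (exp ((0:ℝ) • a) * a * exp ((0:ℝ) • b) +
        exp ((0:ℝ) • a) * (exp ((0:ℝ) • b) * b)) = 0 := by simp
    rw [e0] at this
    exact this
  have ht : Tendsto (fun m : ℕ => ((m : ℝ)+1)⁻¹) atTop (𝓝[≠] 0) := by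
    refine tendsto_nhdsWithin_iff.2 ⟨?_, Eventually.of_forall fun m => ?_⟩
    · simpa using tendsto_one_div_add_atTop_nhds_zero_nat (𝕜 := ℝ)
    · simp; positivity
  have hs := (hasDerivAt_iff_tendsto_slope.1 hd).comp ht
  have hs' := (hs.norm.const_mul (Real.exp (‖a‖ + ‖b‖)))
  simp only [norm_zero, mul_zero] at hs'
  rw [tendsto_iff_norm_sub_tendsto_zero]
  refine squeeze_zero (fun _ => norm_nonneg _) (fun m => ?_) hs'
  set t : ℝ := ((m : ℝ)+1)⁻¹ with htd
  have htp : 0 < t := by positivity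
  have hmt : ((m:ℝ)+1) * t = 1 := mul_inv_cancel₀ (by positivity)
  have e1 : exp (a + b) = exp (t • (a + b)) ^ (m + 1) := by
    have : (a + b) = (m + 1) • (t • (a + b)) := by
      rw [← Nat.cast_smul_eq_nsmul ℝ, smul_smul]; push_cast; rw [hmt, one_smul]
    conv_lhs => rw [this]
    letI : NormedAlgebra ℚ 𝔸 := NormedAlgebra.restrictScalars ℚ ℝ 𝔸
    exact NormedSpace.exp_nsmul _ _
  rw [e1, norm_sub_rev]
  set M := Real.exp (t * (‖a‖ + ‖b‖)) with hM
  have hS : ‖exp (t • (a + b))‖ ≤ M := by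
    refine (aux_normexp _).trans (Real.exp_le_exp.2 ?_)
    rw [norm_smul, Real.norm_of_nonneg htp.le]
    gcongr; exact norm_add_le _ _
  have hT : ‖exp (t • a) * exp (t • b)‖ ≤ M := by
    refine (norm_mul_le _ _).trans ((mul_le_mul (aux_normexp _) (aux_normexp _) (norm_nonneg _) (Real.exp_nonneg _)).trans ?_)
    rw [← Real.exp_add, norm_smul, norm_smul, Real.norm_of_nonneg htp.le, hM, mul_add]
  refine (aux_powsub _ _ M hS hT m).trans ?_
  have hsl : ‖slope (fun t : ℝ => exp (t • (a + b)) - exp (t • a) * exp (t • b)) 0 t‖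
      = (m + 1) * ‖exp (t • (a + b)) - exp (t • a) * exp (t • b)‖ := by
    rw [slope_def_module, norm_smul, sub_zero, htd, inv_inv, ← htd, Real.norm_of_nonneg (by positivity)]
    simp
  have hMm : M ^ m ≤ Real.exp (‖a‖ + ‖b‖) := by
    rw [hM, ← Real.exp_nat_mul]
    apply Real.exp_le_exp.2
    have : (m:ℝ) * t ≤ 1 := by nlinarith
    have h0 : 0 ≤ ‖a‖ + ‖b‖ := by positivity
    nlinarith
  simp only [Function.comp]
  rw [hsl]
  have h0 : 0 ≤ ‖exp (t • (a + b)) - exp (t • a) * exp (t • b)‖ := norm_nonneg _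
  calc _ = M ^ m * ((m + 1) * ‖exp (t • (a + b)) - exp (t • a) * exp (t • b)‖) := by ring
    _ ≤ _ := by gcongr
end LT

section GT2
open NormedSpace Filter Topology
open scoped Matrix.Norms.L2Operator
variable {n : Type*} [Fintype n] [DecidableEq n] [Nonempty n]

lemma golden_thompson (H K : Matrix n n ℂ) (hH : H.IsHermitian) (hK : K.IsHermitian) :
    (exp (H + K)).trace.re ≤ (exp H * exp K).trace.re := by
  have h := aux_trotter H K
  have hsub : Tendsto (fun j : ℕ => 2 ^ j - 1) atTop atTop := by
    exact tendsto_atTop_mono (fun j => by have := Nat.lt_two_pow_self (n := j); simp only [id]; omega) tendsto_id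
  have h1 := h.comp hsub
  have hc : Continuous (fun X : Matrix n n ℂ => X.trace.re) :=
    Complex.continuous_re.comp (continuous_id.matrix_trace)
  have h2 := (hc.tendsto _).comp h1
  refine le_of_tendsto h2 (Eventually.of_forall fun j => ?_)
  have e : 2 ^ j - 1 + 1 = 2 ^ j := Nat.sub_add_cancel Nat.one_le_two_pow
  have e' : (((2 ^ j - 1 : ℕ) : ℝ) + 1) = ((2 ^ j : ℕ) : ℝ) := by
    rw [← e]; push_cast; simp
  simp only [Function.comp, e, e']
  set t : ℝ := ((2 ^ j : ℕ) : ℝ)⁻¹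
  have hr : ∀ X : Matrix n n ℂ, exp (t • X) ^ (2 ^ j) = exp X := by
    intro X
    rw [← Matrix.exp_nsmul, ← Nat.cast_smul_eq_nsmul ℝ, smul_smul, mul_inv_cancel₀ (by positivity),
      one_smul]
  have hh : ∀ X : Matrix n n ℂ, X.IsHermitian → (exp (t • X)).IsHermitian := by
    intro X hX
    apply Matrix.IsHermitian.exp
    exact hX.smul (by simp [IsSelfAdjoint])
  have := (aux_AB j).2 _ _ (hh H hH) (hh K hK)
  rwa [hr, hr] at this
end GT2

section SP
open NormedSpace
variable {n : Type*} [Fintype n] [DecidableEq n]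

lemma sp_exp (V : unitaryGroup n ℂ) (d : n → ℝ) :
    exp ((V : Matrix n n ℂ) * diagonal (fun i => (d i : ℂ)) * (V : Matrix n n ℂ)ᴴ) =
      (V : Matrix n n ℂ) * diagonal (fun i => ((Real.exp (d i) : ℝ) : ℂ)) * (V : Matrix n n ℂ)ᴴ := by
  have hV : (V : Matrix n n ℂ) * (V : Matrix n n ℂ)ᴴ = 1 := mem_unitaryGroup_iff.1 V.2
  have hi : (V : Matrix n n ℂ)⁻¹ = (V : Matrix n n ℂ)ᴴ := inv_eq_right_inv hV
  have hu : IsUnit (V : Matrix n n ℂ) := (isUnit_iff_isUnit_det _).2 (isUnit_det_of_right_inverse hV)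
  rw [← hi, Matrix.exp_conj _ _ hu, Matrix.exp_diagonal]
  congr 3
  funext i
  rw [Pi.exp_def]
  simp [Complex.exp_eq_exp_ℂ]

lemma sp_psd (V : unitaryGroup n ℂ) (d : n → ℝ) (hd : ∀ i, 0 ≤ d i) :
    ((V : Matrix n n ℂ) * diagonal (fun i => (d i : ℂ)) * (V : Matrix n n ℂ)ᴴ).PosSemidef := by
  apply PosSemidef.mul_mul_conjTranspose_same
  exact PosSemidef.diagonal (fun i => by simpa using hd i)

lemma sp_one (V : unitaryGroup n ℂ) :
    (1 : Matrix n n ℂ) = (V : Matrix n n ℂ) * diagonal (fun _ => ((1 : ℝ) : ℂ)) * (V : Matrix n n ℂ)ᴴ := by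
  have hV : (V : Matrix n n ℂ) * (V : Matrix n n ℂ)ᴴ = 1 := mem_unitaryGroup_iff.1 V.2
  simp [hV]

lemma sp_add (V : Matrix n n ℂ) (d e : n → ℝ) :
    V * diagonal (fun i => (d i : ℂ)) * Vᴴ + V * diagonal (fun i => (e i : ℂ)) * Vᴴ
      = V * diagonal (fun i => ((d i + e i : ℝ) : ℂ)) * Vᴴ := by
  rw [← add_mul, ← mul_add, diagonal_add]; simp

lemma sp_sub (V : Matrix n n ℂ) (d e : n → ℝ) :
    V * diagonal (fun i => (d i : ℂ)) * Vᴴ - V * diagonal (fun i => (e i : ℂ)) * Vᴴ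
      = V * diagonal (fun i => ((d i - e i : ℝ) : ℂ)) * Vᴴ := by
  rw [← sub_mul, ← mul_sub, diagonal_sub]; simp

lemma sp_smul (V : Matrix n n ℂ) (c : ℝ) (d : n → ℝ) :
    c • (V * diagonal (fun i => (d i : ℂ)) * Vᴴ)
      = V * diagonal (fun i => ((c * d i : ℝ) : ℂ)) * Vᴴ := by
  rw [← Matrix.smul_mul, ← Matrix.mul_smul, ← diagonal_smul]
  congr 3; funext i; simp

lemma sp_mul (V : unitaryGroup n ℂ) (d e : n → ℝ) :
    ((V : Matrix n n ℂ) * diagonal (fun i => (d i : ℂ)) * (V : Matrix n n ℂ)ᴴ) *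
      ((V : Matrix n n ℂ) * diagonal (fun i => (e i : ℂ)) * (V : Matrix n n ℂ)ᴴ)
      = (V : Matrix n n ℂ) * diagonal (fun i => ((d i * e i : ℝ) : ℂ)) * (V : Matrix n n ℂ)ᴴ := by
  have hV : (V : Matrix n n ℂ)ᴴ * (V : Matrix n n ℂ) = 1 := mem_unitaryGroup_iff'.1 V.2
  calc _ = (V : Matrix n n ℂ) * diagonal (fun i => (d i : ℂ)) * ((V : Matrix n n ℂ)ᴴ *
      (V : Matrix n n ℂ)) * diagonal (fun i => (e i : ℂ)) * (V : Matrix n n ℂ)ᴴ := by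
        simp only [mul_assoc]
    _ = _ := by
      rw [hV, mul_one, mul_assoc (V : Matrix n n ℂ), diagonal_mul_diagonal]; simp

lemma sp_spec {A : Matrix n n ℂ} (hA : A.IsHermitian) :
    A = (hA.eigenvectorUnitary : Matrix n n ℂ) * diagonal (fun i => (hA.eigenvalues i : ℂ)) *
      (hA.eigenvectorUnitary : Matrix n n ℂ)ᴴ := by
  conv_lhs => rw [hA.spectral_theorem]
  rfl

lemma sp_trace (V : unitaryGroup n ℂ) (d : n → ℝ) :
    ((V : Matrix n n ℂ) * diagonal (fun i => (d i : ℂ)) * (V : Matrix n n ℂ)ᴴ).trace.re = ∑ i, d i := by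
  have hV : (V : Matrix n n ℂ)ᴴ * (V : Matrix n n ℂ) = 1 := mem_unitaryGroup_iff'.1 V.2
  rw [trace_mul_comm, ← mul_assoc, hV, one_mul, trace_diagonal]
  simp

lemma sp_mgf {A : Matrix n n ℂ} (hA : A.IsHermitian) (p a1 a0 g : ℝ)
    (h : ∀ i, p * Real.exp (a1 * hA.eigenvalues i - g * hA.eigenvalues i ^ 2) +
      (1 - p) * Real.exp (a0 * hA.eigenvalues i - g * hA.eigenvalues i ^ 2) ≤ 1) :
    (1 - (p • exp (a1 • A - g • (A * A)) + (1 - p) • exp (a0 • A - g • (A * A)))).PosSemidef := by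
  have key : ∀ a : ℝ, exp (a • A - g • (A * A)) =
      (hA.eigenvectorUnitary : Matrix n n ℂ) * diagonal (fun i => ((Real.exp (a * hA.eigenvalues i -
        g * (hA.eigenvalues i * hA.eigenvalues i)) : ℝ) : ℂ)) *
      (hA.eigenvectorUnitary : Matrix n n ℂ)ᴴ := by
    intro a
    conv_lhs => rw [sp_spec hA]
    rw [sp_mul, sp_smul, sp_smul, sp_sub, sp_exp]
  rw [key, key, sp_smul, sp_smul, sp_add, sp_one hA.eigenvectorUnitary, sp_sub]
  apply sp_psd
  intro i
  have := h i
  rw [pow_two] at this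
  linarith

lemma sp_tr_le {H W : Matrix n n ℂ} (hH : H.IsHermitian) (hW : (1 - W).PosSemidef) :
    (exp H * W).trace.re ≤ (exp H).trace.re := by
  set F := exp ((1/2 : ℝ) • H) with hF
  have hFh : F.IsHermitian := Matrix.IsHermitian.exp (hH.smul (by simp [IsSelfAdjoint]))
  have hFF : exp H = F * F := by
    rw [hF, ← Matrix.exp_add_of_commute _ _ (Commute.refl _), ← add_smul]; norm_num
  have h1 : 0 ≤ (F * (1 - W) * Fᴴ).trace := (hW.mul_mul_conjTranspose_same F).trace_nonneg
  have h2 : (F * (1 - W) * Fᴴ).trace = (exp H).trace - (exp H * W).trace := by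
    rw [hFh.eq, trace_mul_comm, ← mul_assoc, ← hFF, mul_sub, mul_one, trace_sub]
  rw [h2] at h1
  have := (Complex.le_def.1 h1).1
  simp at this
  linarith

lemma sp_vec {Y : Matrix n n ℂ} (hY : Y.IsHermitian) (x : n → ℂ) (hx : star x ⬝ᵥ x = 1) :
    Real.exp (star x ⬝ᵥ Y *ᵥ x).re ≤ (exp Y).trace.re := by
  have hne : Nonempty n := by
    by_contra h
    rw [not_nonempty_iff] at h
    simp [dotProduct] at hx
  obtain ⟨i0, hi0⟩ := Finite.exists_max hY.eigenvalues
  have h1 : ((hY.eigenvalues i0) • (1 : Matrix n n ℂ) - Y).PosSemidef := by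
    conv => enter [1, 2]; rw [sp_spec hY]
    rw [sp_one hY.eigenvectorUnitary, sp_smul, sp_sub]
    apply sp_psd
    intro i
    have := hi0 i
    linarith
  have h2 := h1.re_dotProduct_nonneg x
  rw [sub_mulVec, dotProduct_sub, smul_mulVec, one_mulVec, dotProduct_smul, hx] at h2
  simp at h2
  have h3 : (exp Y).trace.re = ∑ i, Real.exp (hY.eigenvalues i) := by
    conv_lhs => rw [sp_spec hY]
    rw [sp_exp, sp_trace]
  rw [h3]
  calc _ ≤ Real.exp (hY.eigenvalues i0) := Real.exp_le_exp.2 h2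
    _ ≤ _ := Finset.single_le_sum (f := fun i => Real.exp (hY.eigenvalues i))
        (fun i _ => Real.exp_nonneg _) (Finset.mem_univ i0)

lemma sp_inv [Nonempty n] {N : Matrix n n ℂ} (hN : N.IsHermitian) (c : ℝ) (hc : 0 < c)
    (h : ∀ x : n → ℂ, star x ⬝ᵥ x = 1 → c < (star x ⬝ᵥ N *ᵥ x).re) :
    (N⁻¹).trace.re < Fintype.card n / c := by
  have hl : ∀ i, c < hN.eigenvalues i := by
    intro i
    rw [hN.eigenvalues_eq]
    apply h
    have := hN.eigenvectorBasis.orthonormal.1 i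
    have h2 : inner ℂ (hN.eigenvectorBasis i) (hN.eigenvectorBasis i) = (1 : ℂ) := by
      rw [inner_self_eq_norm_sq_to_K, this]; simp
    rw [EuclideanSpace.inner_eq_star_dotProduct] at h2
    rw [dotProduct_comm]; exact h2
  have hinv : N⁻¹ = (hN.eigenvectorUnitary : Matrix n n ℂ) *
      diagonal (fun i => (((hN.eigenvalues i)⁻¹ : ℝ) : ℂ)) *
      (hN.eigenvectorUnitary : Matrix n n ℂ)ᴴ := by
    apply inv_eq_right_inv
    conv => enter [1, 1]; rw [sp_spec hN]
    rw [sp_mul, sp_one hN.eigenvectorUnitary]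
    congr 3
    funext i
    rw [mul_inv_cancel₀ (by linarith [hl i])]
  rw [hinv, sp_trace]
  calc ∑ i, (hN.eigenvalues i)⁻¹ < ∑ i : n, c⁻¹ := by
        apply Finset.sum_lt_sum_of_nonempty Finset.univ_nonempty
        intro i _
        exact inv_strictAnti₀ hc (hl i)
    _ = _ := by simp [div_eq_mul_inv]

lemma sp_iter [Nonempty n] (w : Bool → ℝ) (hw : ∀ b, 0 ≤ w b) (m : ℕ) :
    ∀ (Y : Fin m → Bool → Matrix n n ℂ) (_ : ∀ k b, (Y k b).IsHermitian)
    (_ : ∀ k, (1 - (w true • exp (Y k true) + w false • exp (Y k false))).PosSemidef)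
    (H : Matrix n n ℂ) (_ : H.IsHermitian),
    ∑ v : Fin m → Bool, (∏ k, w (v k)) * (exp (H + ∑ k, Y k (v k))).trace.re ≤ (exp H).trace.re := by
  induction m with
  | zero => intro Y _ _ H _; simp
  | succ m ih =>
    intro Y hY hW H hH
    rw [← (Fin.consEquiv (fun _ => Bool)).sum_comp, Fintype.sum_prod_type_right]
    refine le_trans (Finset.sum_le_sum (g := fun v : Fin m → Bool => (∏ k, w (v k)) *
      (exp (H + ∑ k, Y k.succ (v k))).trace.re) fun v _ => ?_)
      (ih (fun k => Y k.succ) (fun k b => hY _ _) (fun k => hW _) H hH)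
    have hH' : (H + ∑ k : Fin m, Y k.succ (v k)).IsHermitian := by
      apply hH.add
      unfold IsHermitian
      rw [conjTranspose_sum]
      exact Finset.sum_congr rfl fun k _ => (hY _ _)
    set H' := H + ∑ k : Fin m, Y k.succ (v k) with hH'd
    have e : ∀ b, H + ∑ k, Y k ((Fin.cons b v : Fin (m+1) → Bool) k) = H' + Y 0 b := by
      intro b
      rw [Fin.sum_univ_succ]; simp [hH'd]; abel
    have e2 : ∀ b, ∏ k, w ((Fin.cons b v : Fin (m+1) → Bool) k) = w b * ∏ k, w (v k) := by
      intro b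
      rw [Fin.prod_univ_succ]; simp
    simp only [Fintype.sum_bool, Fin.consEquiv_apply, e, e2]
    have g1 := golden_thompson H' (Y 0 true) hH' (hY _ _)
    have g2 := golden_thompson H' (Y 0 false) hH' (hY _ _)
    have g3 := sp_tr_le hH' (hW 0)
    rw [mul_add, trace_add, Complex.add_re, mul_smul_comm, mul_smul_comm, trace_smul, trace_smul,
      Complex.smul_re, Complex.smul_re, smul_eq_mul, smul_eq_mul] at g3
    have hp : 0 ≤ ∏ k, w (v k) := Finset.prod_nonneg fun k _ => hw _
    calc _ = (∏ k, w (v k)) * (w true * (exp (H' + Y 0 true)).trace.re +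
          w false * (exp (H' + Y 0 false)).trace.re) := by ring
      _ ≤ _ := by
        apply mul_le_mul_of_nonneg_left _ hp
        have := mul_le_mul_of_nonneg_left g1 (hw true)
        have := mul_le_mul_of_nonneg_left g2 (hw false)
        linarith
end SP

section SC

lemma sc_phi (x c : ℝ) (hc : 0 < c) (hx : x ≤ c) :
    c ^ 2 * (Real.exp x - 1 - x) ≤ x ^ 2 * (Real.exp c - 1 - c) := by
  rcases le_or_gt 0 x with h0 | h0
  · have hs : ∀ y : ℝ, HasSum (fun k : ℕ => y ^ (k + 2) / ((k + 2).factorial : ℝ))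
        (Real.exp y - 1 - y) := by
      intro y
      have h := NormedSpace.expSeries_div_hasSum_exp y
      rw [← Real.exp_eq_exp_ℝ] at h
      have := (hasSum_nat_add_iff' 2).2 h
      simpa [Finset.sum_range_succ, sub_sub] using this
    refine hasSum_le (fun k => ?_) ((hs x).mul_left (c ^ 2)) ((hs c).mul_left (x ^ 2))
    have : x ^ k ≤ c ^ k := by gcongr
    rw [← mul_div_assoc, ← mul_div_assoc]
    apply div_le_div_of_nonneg_right _ (by positivity)
    calc c ^ 2 * x ^ (k + 2) = (c ^ 2 * x ^ 2) * x ^ k := by ring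
      _ ≤ (c ^ 2 * x ^ 2) * c ^ k := by gcongr
      _ = _ := by ring
  · have h1 := Real.quadratic_le_exp_of_nonneg hc.le
    have h2 := Real.quadratic_le_exp_of_nonneg (x := -x) (by linarith)
    have h3 : Real.exp x ≤ 1 + x + x ^ 2 / 2 := by
      have e : Real.exp x * Real.exp (-x) = 1 := by rw [← Real.exp_add]; simp
      have hp := Real.exp_pos x
      have hq : 0 < 1 + x + x ^ 2 / 2 := by nlinarith [sq_nonneg (x + 1)]
      have h4 : 1 ≤ (1 + x + x ^ 2 / 2) * Real.exp (-x) := by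
        calc (1:ℝ) ≤ (1 + x + x ^ 2 / 2) * (1 + -x + (-x) ^ 2 / 2) := by
              nlinarith [sq_nonneg (x ^ 2)]
          _ ≤ _ := by gcongr
      have h5 : (1 + x + x ^ 2 / 2) * Real.exp (-x) * Real.exp x = 1 + x + x ^ 2 / 2 := by
        rw [mul_assoc, mul_comm (Real.exp (-x)), e, mul_one]
      nlinarith
    nlinarith [sq_nonneg c, sq_nonneg x, mul_nonneg (sq_nonneg c) (sq_nonneg x),
      mul_le_mul_of_nonneg_left h3 (sq_nonneg c), mul_le_mul_of_nonneg_left h1 (sq_nonneg x)]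

lemma sc_mgf (p θ μ b : ℝ) (hp0 : 0 < p) (hp1 : p < 1) (hθ : 0 < θ) (hμ : 0 < μ) (hb0 : 0 ≤ b)
    (hb : b ≤ μ) (g : ℝ) (hg : g = (1 / p - 1) * (Real.exp (θ * μ) - 1 - θ * μ) / μ ^ 2) :
    p * Real.exp (-θ * (1 / p - 1) * b - g * b ^ 2) + (1 - p) * Real.exp (θ * b - g * b ^ 2) ≤ 1 := by
  have hv : 0 < 1 / p - 1 := by rw [sub_pos, lt_div_iff₀ hp0]; linarith
  set v := 1 / p - 1 with hvd
  have hpv : p * v = 1 - p := by rw [hvd]; field_simp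
  have hc : 0 < θ * μ := mul_pos hθ hμ
  set φ := (Real.exp (θ * μ) - 1 - θ * μ) / (θ * μ) ^ 2 with hφ
  have hx : ∀ x, x ≤ θ * μ → Real.exp x ≤ 1 + x + x ^ 2 * φ := by
    intro x hx
    have := sc_phi x _ hc hx
    have h2 : Real.exp x - 1 - x ≤ x ^ 2 * φ := by
      rw [hφ, ← mul_div_assoc, le_div_iff₀ (by positivity)]; linarith
    linarith
  have h1 := hx (-θ * v * b) (by
    have : 0 ≤ θ * v * b := by positivity
    nlinarith)
  have h0 := hx (θ * b) (by gcongr)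
  have hgb : g * b ^ 2 = v * (θ * b) ^ 2 * φ := by
    rw [hg, hφ]; field_simp
  rw [Real.exp_sub, Real.exp_sub, ← mul_div_assoc, ← mul_div_assoc, ← add_div,
    div_le_one (Real.exp_pos _)]
  have h3 := Real.add_one_le_exp (g * b ^ 2)
  refine le_trans ?_ h3
  rw [hgb]
  calc _ ≤ p * (1 + -θ * v * b + (-θ * v * b) ^ 2 * φ) + (1 - p) * (1 + θ * b + (θ * b) ^ 2 * φ) := by
        have : 0 ≤ 1 - p := by linarith
        gcongr
    _ = 1 + (1 - p - p * v) * (θ * b) + ((p * v) * v + (1 - p)) * ((θ * b) ^ 2 * φ) := by ring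
    _ = 1 + (v * (θ * b) ^ 2 * φ) := by
        have : (p * v) * v + (1 - p) = v := by linear_combination (v - 1) * hpv
        rw [this, hpv]; ring
    _ ≤ _ := by linarith

lemma sc_final (μ ϱ r : ℝ) (hμ : 0 < μ) (hϱ : 0 < ϱ) (hr : 0 < r) :
    ∃ θ > 0, -(θ * r - (ϱ / μ ^ 2) * (Real.exp (θ * μ) - 1 - θ * μ)) =
      -(ϱ / μ ^ 2) * hfun (μ * r / ϱ) := by
  have ha : 0 < μ * r / ϱ := by positivity
  refine ⟨Real.log (1 + μ * r / ϱ) / μ, div_pos (Real.log_pos (by linarith)) hμ, ?_⟩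
  rw [div_mul_cancel₀ _ hμ.ne', Real.exp_log (by linarith)]
  unfold hfun
  generalize Real.log (1 + μ * r / ϱ) = l
  field_simp
  ring
end SC

section BE
open NormedSpace
variable {n : Type*} [Fintype n] [DecidableEq n] [Nonempty n]

lemma be_sq {A : Matrix n n ℂ} (hA : A.IsHermitian) (M : ℝ)
    (h : ∀ i, 0 ≤ hA.eigenvalues i ∧ hA.eigenvalues i ≤ M) (x : n → ℂ) :
    (star x ⬝ᵥ (A * A) *ᵥ x).re ≤ M * (star x ⬝ᵥ A *ᵥ x).re := by
  have h1 : (M • A - A * A).PosSemidef := by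
    rw [sp_spec hA, sp_mul, sp_smul, sp_sub]
    apply sp_psd
    intro i
    nlinarith [h i]
  have h2 := h1.re_dotProduct_nonneg x
  rw [sub_mulVec, dotProduct_sub, smul_mulVec, dotProduct_smul] at h2
  simp at h2
  linarith

lemma be_main (m : ℕ) (A : Fin m → Matrix n n ℂ) (hA : ∀ k, (A k).IsHermitian) (M : ℝ) (hM : 0 < M)
    (hev : ∀ k i, 0 ≤ (hA k).eigenvalues i ∧ (hA k).eigenvalues i ≤ M)
    (κ : Fin m → ℝ) (K : ℝ) (hK : 0 < K) (hκ0 : ∀ k, 0 < κ k) (hκ : ∀ k, κ k ≤ K)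
    (hsum : ∀ x : n → ℂ, star x ⬝ᵥ x = 1 → ∑ k, (star x ⬝ᵥ A k *ᵥ x).re ≤ 1)
    (hnn : ∀ x : n → ℂ, ∀ k, 0 ≤ (star x ⬝ᵥ A k *ᵥ x).re)
    (p : ℝ) (hp0 : 0 < p) (hp1 : p < 1) (μ ϱ r : ℝ) (hμ : K * M ≤ μ)
    (hϱ : ϱ = K ^ 2 * (1 / p - 1) * M) (hr : 0 < r)
    (ξ : Bool → ℝ) (hξ1 : ξ true = 1 / p - 1) (hξ0 : ξ false = -1)
    (w : Bool → ℝ) (hw1 : w true = p) (hw0 : w false = 1 - p)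
    (Bad : Finset (Fin m → Bool))
    (hBad : ∀ v ∈ Bad, ∃ x : n → ℂ, star x ⬝ᵥ x = 1 ∧
      ∑ k, κ k * ξ (v k) * (star x ⬝ᵥ A k *ᵥ x).re ≤ -r) :
    ∑ v ∈ Bad, ∏ k, w (v k) ≤ Fintype.card n * Real.exp (-(ϱ / μ ^ 2) * hfun (μ * r / ϱ)) := by
  have hμp : 0 < μ := lt_of_lt_of_le (by positivity) hμ
  have hvp : 0 < 1 / p - 1 := by rw [sub_pos, lt_div_iff₀ hp0]; linarith
  have hϱp : 0 < ϱ := by rw [hϱ]; positivity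
  obtain ⟨θ, hθ, hfin⟩ := sc_final μ ϱ r hμp hϱp hr
  rw [← hfin]
  set g := (1 / p - 1) * (Real.exp (θ * μ) - 1 - θ * μ) / μ ^ 2 with hg
  have hg0 : 0 ≤ g := by
    have := Real.add_one_le_exp (θ * μ)
    have h2 : 0 ≤ Real.exp (θ * μ) - 1 - θ * μ := by linarith
    positivity
  let Y : Fin m → Bool → Matrix n n ℂ := fun k b =>
    (-θ * ξ b * κ k) • A k - (g * κ k ^ 2) • (A k * A k)
  have hw : ∀ b, 0 ≤ w b := by
    intro b; cases b
    · rw [hw0]; linarith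
    · rw [hw1]; exact hp0.le
  have hYh : ∀ k b, (Y k b).IsHermitian := by
    intro k b
    have h2 : (A k * A k).IsHermitian := by
      rw [← pow_two]; exact (hA k).pow 2
    exact ((hA k).smul (by simp [IsSelfAdjoint])).sub (h2.smul (by simp [IsSelfAdjoint]))
  have hmgf : ∀ k, (1 - (w true • exp (Y k true) + w false • exp (Y k false))).PosSemidef := by
    intro k
    rw [hw1, hw0]
    apply sp_mgf (hA k)
    intro i
    obtain ⟨h0, h1⟩ := hev k i
    have hb0 : 0 ≤ κ k * (hA k).eigenvalues i := mul_nonneg (hκ0 k).le h0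
    have hb1 : κ k * (hA k).eigenvalues i ≤ μ := by
      refine le_trans ?_ hμ
      exact mul_le_mul (hκ k) h1 h0 hK.le
    have := sc_mgf p θ μ _ hp0 hp1 hθ hμp hb0 hb1 g hg
    rw [hξ1, hξ0]
    convert this using 4 <;> ring
  have hit := sp_iter w hw m Y hYh hmgf 0 isHermitian_zero
  have htr : (exp (0 : Matrix n n ℂ)).trace.re = Fintype.card n := by
    rw [exp_zero, trace_one]; simp
  rw [htr] at hit
  set E := θ * r - ϱ / μ ^ 2 * (Real.exp (θ * μ) - 1 - θ * μ) with hE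
  have hkey : ∀ v ∈ Bad, Real.exp E ≤ (exp (0 + ∑ k, Y k (v k))).trace.re := by
    intro v hv
    obtain ⟨x, hx, hxr⟩ := hBad v hv
    have hYs : (0 + ∑ k, Y k (v k)).IsHermitian := by
      rw [zero_add]
      unfold IsHermitian
      rw [conjTranspose_sum]
      exact Finset.sum_congr rfl fun k _ => (hYh _ _)
    refine le_trans (Real.exp_le_exp.2 ?_) (sp_vec hYs x hx)
    rw [zero_add, sum_mulVec, dotProduct_sum, Complex.re_sum]
    have e : ∀ k, (star x ⬝ᵥ Y k (v k) *ᵥ x).re =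
        -θ * (κ k * ξ (v k) * (star x ⬝ᵥ A k *ᵥ x).re) -
          g * κ k ^ 2 * (star x ⬝ᵥ (A k * A k) *ᵥ x).re := by
      intro k
      simp only [Y, sub_mulVec, dotProduct_sub, smul_mulVec, dotProduct_smul, Complex.sub_re,
        Complex.smul_re, smul_eq_mul]
      ring
    have e2 : ∀ k, g * κ k ^ 2 * (star x ⬝ᵥ (A k * A k) *ᵥ x).re ≤
        g * K ^ 2 * M * (star x ⬝ᵥ A k *ᵥ x).re := by
      intro k
      have h1 := be_sq (hA k) M (hev k) x
      have h2 := hnn x k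
      have h3 : κ k ^ 2 ≤ K ^ 2 := by
        have := hκ0 k
        have := hκ k
        gcongr
      calc _ ≤ g * κ k ^ 2 * (M * (star x ⬝ᵥ A k *ᵥ x).re) := by gcongr
        _ ≤ g * K ^ 2 * (M * (star x ⬝ᵥ A k *ᵥ x).re) := by gcongr
        _ = _ := by ring
    simp only [e]
    rw [Finset.sum_sub_distrib, ← Finset.mul_sum]
    have h3 := Finset.sum_le_sum (fun k (_ : k ∈ Finset.univ) => e2 k)
    rw [← Finset.mul_sum] at h3
    have h4 : g * K ^ 2 * M * ∑ k, (star x ⬝ᵥ A k *ᵥ x).re ≤ g * K ^ 2 * M :=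
      mul_le_of_le_one_right (by positivity) (hsum x hx)
    have h5 : g * K ^ 2 * M = ϱ / μ ^ 2 * (Real.exp (θ * μ) - 1 - θ * μ) := by
      rw [hg, hϱ]; ring
    have h6 := mul_le_mul_of_nonneg_left hxr hθ.le
    rw [hE]
    linarith
  have hpos : ∀ v : Fin m → Bool, 0 ≤ ∏ k, w (v k) := fun v => Finset.prod_nonneg fun k _ => hw _
  rw [Real.exp_neg, ← div_eq_mul_inv, le_div_iff₀ (Real.exp_pos _), Finset.sum_mul]
  refine le_trans ?_ hit
  refine le_trans (Finset.sum_le_sum fun v hv => mul_le_mul_of_nonneg_left (hkey v hv) (hpos v)) ?_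
  apply Finset.sum_le_sum_of_subset_of_nonneg (Finset.subset_univ _)
  intro v _ _
  apply mul_nonneg (hpos v)
  have hYs : (∑ k, Y k (v k)).IsHermitian := by
      unfold IsHermitian
      rw [conjTranspose_sum]
      exact Finset.sum_congr rfl fun k _ => (hYh _ _)
  rw [zero_add]
  conv => rw [sp_spec hYs]
  rw [sp_exp, sp_trace]
  exact Finset.sum_nonneg fun i _ => Real.exp_nonneg _
end BE

section PR
variable {Ω : Type*} [MeasurableSpace Ω] {P : Measure Ω} [IsProbabilityMeasure P]

lemma pr_curry {ι κ : Type*} [Countable ι] [Countable κ] (X : ι × κ → Ω → ℝ)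
    (mX : ∀ i, Measurable (X i)) (h : iIndepFun X P) :
    iIndepFun (fun (i : ι) ω (j : κ) => X (i, j) ω) P := by
  have : ∀ i, IsProbabilityMeasure (P.map (X i)) :=
    fun i ↦ Measure.isProbabilityMeasure_map (mX i).aemeasurable
  have hm : ∀ i, Measurable (fun ω (j : κ) => X (i, j) ω) := fun i => by fun_prop
  rw [iIndepFun_iff_map_fun_eq_infinitePi_map hm]
  have h1 := h.map_fun_eq_infinitePi_map mX
  have h2 : ∀ i, P.map (fun ω (j : κ) => X (i, j) ω) =
      Measure.infinitePi (fun j => P.map (X (i, j))) := fun i =>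
    (h.precomp (g := fun j : κ => (i, j)) (fun a b hab => by simpa using hab)).map_fun_eq_infinitePi_map
      (fun j => mX _)
  simp only [h2]
  rw [← Measure.infinitePi_map_curry (fun i j => P.map (X (i, j)))]
  have : (fun p : ι × κ => P.map (X (p.1, p.2))) = fun p => P.map (X p) := rfl
  rw [this, ← h1, Measure.map_map (MeasurableEquiv.measurable _) (measurable_pi_iff.2 mX)]
  rfl

lemma pr_main (nT Q : ℕ) (hnT : 0 < nT) (E : Fin (nT * Q) → Ω → ℝ) (hEmeas : ∀ i, Measurable (E i))
    (hindep : iIndepFun E P) (hident : ∀ i j, IdentDistrib (E i) (E j) P P) (c pbar : ℝ)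
    (hpbar : pbar = (P {ω | c ≤ ∑ t : Fin Q, E (blockIdx nT Q ⟨0, hnT⟩ t) ω}).toReal)
    (w : Bool → ℝ) (hw1 : w true = pbar) (hw0 : w false = 1 - pbar)
    (δ : Ω → Fin nT → Bool)
    (hδ : ∀ ω k, δ ω k = true ↔ c ≤ ∑ t : Fin Q, E (blockIdx nT Q k t) ω)
    (B : Finset (Fin nT → Bool)) :
    MeasurableSet {ω | δ ω ∈ B} ∧ (P {ω | δ ω ∈ B}).toReal = ∑ v ∈ B, ∏ k, w (v k) := by
  let X : Fin nT × Fin Q → Ω → ℝ := fun i => E (finProdFinEquiv i)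
  have hX : iIndepFun X P := hindep.precomp finProdFinEquiv.injective
  have hXm : ∀ i, Measurable (X i) := fun i => hEmeas _
  have hc := pr_curry X hXm hX
  have hsm : Measurable (fun y : Fin Q → ℝ => ∑ t, y t) := by fun_prop
  have hb := hc.comp (fun _ y => ∑ t, y t) (fun _ => hsm)
  have hid : ∀ k k', IdentDistrib (fun ω => ∑ t : Fin Q, E (blockIdx nT Q k t) ω)
      (fun ω => ∑ t : Fin Q, E (blockIdx nT Q k' t) ω) P P := by
    intro k k'
    have h1 : ∀ k, iIndepFun (fun t : Fin Q => E (blockIdx nT Q k t)) P := fun k =>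
      hindep.precomp (g := fun t => blockIdx nT Q k t) (fun a b hab => by
        simpa [blockIdx] using hab)
    exact (IdentDistrib.pi (fun t => hident _ _) (h1 k) (h1 k')).comp hsm
  have hm : ∀ k, Measurable (fun ω => ∑ t : Fin Q, E (blockIdx nT Q k t) ω) := fun k =>
    Finset.measurable_sum _ fun t _ => hEmeas _
  have hset : ∀ k, MeasurableSet {ω | c ≤ ∑ t : Fin Q, E (blockIdx nT Q k t) ω} := fun k =>
    measurableSet_le measurable_const (hm k)
  have hpk : ∀ k, (P {ω | c ≤ ∑ t : Fin Q, E (blockIdx nT Q k t) ω}).toReal = pbar := by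
    intro k
    rw [hpbar]
    congr 1
    exact (hid k ⟨0, hnT⟩).measure_mem_eq (s := Set.Ici c) measurableSet_Ici
  have hδs : ∀ k b, {ω | δ ω k = b} = (fun ω => ∑ t : Fin Q, E (blockIdx nT Q k t) ω) ⁻¹'
      (if b then Set.Ici c else Set.Iio c) := by
    intro k b
    ext ω
    cases b
    · have := hδ ω k
      simp only [Set.mem_setOf_eq, Set.mem_preimage, Bool.false_eq_true, if_false, Set.mem_Iio]
      rw [← not_le, ← this]; simp
    · simp [hδ]
  have hmb : ∀ b : Bool, MeasurableSet (if b then Set.Ici c else Set.Iio c) := by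
    intro b; cases b <;> simp
  have hδm : ∀ k b, MeasurableSet {ω | δ ω k = b} := fun k b => by
    rw [hδs]; exact hm k (hmb b)
  have hw : ∀ k b, (P {ω | δ ω k = b}).toReal = w b := by
    intro k b
    cases b
    · have e : {ω | δ ω k = false} = {ω | c ≤ ∑ t : Fin Q, E (blockIdx nT Q k t) ω}ᶜ := by
        ext ω; simp only [Set.mem_setOf_eq, Set.mem_compl_iff]; rw [← hδ]; simp
      rw [e, prob_compl_eq_one_sub (hset k), ENNReal.toReal_sub_of_le prob_le_one (by simp), hpk, hw0]
      simp
    · have e : {ω | δ ω k = true} = {ω | c ≤ ∑ t : Fin Q, E (blockIdx nT Q k t) ω} := by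
        ext ω; simp [hδ]
      rw [e, hpk, hw1]
  have hv : ∀ v : Fin nT → Bool, {ω | δ ω = v} = ⋂ k ∈ (Finset.univ : Finset (Fin nT)), {ω | δ ω k = v k} := by
    intro v; ext ω; simp [funext_iff]
  have hvm : ∀ v : Fin nT → Bool, MeasurableSet {ω | δ ω = v} := by
    intro v; rw [hv]; exact Finset.measurableSet_biInter _ fun k _ => hδm k _
  have hvP : ∀ v : Fin nT → Bool, (P {ω | δ ω = v}).toReal = ∏ k, w (v k) := by
    intro v
    rw [hv]
    simp only [hδs]
    have := hb.measure_inter_preimage_eq_mul Finset.univ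
      (sets := fun k => if v k then Set.Ici c else Set.Iio c) (fun k _ => hmb _)
    have h3 : ∀ k, ((fun y : Fin Q → ℝ => ∑ t, y t) ∘ fun ω j => X (k, j) ω) =
      (fun ω => ∑ t : Fin Q, E (blockIdx nT Q k t) ω) := fun k => rfl
    simp only [h3] at this
    rw [this, ENNReal.toReal_prod]
    refine Finset.prod_congr rfl fun k _ => ?_
    rw [← hδs, hw]
  have hB : {ω | δ ω ∈ B} = ⋃ v ∈ B, {ω | δ ω = v} := by ext ω; simp
  refine ⟨?_, ?_⟩
  · rw [hB]; exact Finset.measurableSet_biUnion _ fun v _ => hvm v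
  · rw [hB, measure_biUnion_finset _ (fun v _ => hvm v), ENNReal.toReal_sum (by simp)]
    · exact Finset.sum_congr rfl fun v _ => hvP v
    · intro v _ v' _ hne
      exact Set.disjoint_left.2 fun ω h1 h2 => hne (h1.symm.trans h2)
end PR

section MO
variable {N s : ℕ} (Us : Matrix (Fin N) (Fin s) ℂ)

lemma mo_quad (d : Fin N → ℝ) (x : Fin s → ℂ) :
    star x ⬝ᵥ (Usᴴ * diagonal (fun i => (d i : ℂ)) * Us) *ᵥ x =
      ((∑ i, d i * ‖(Us *ᵥ x) i‖ ^ 2 : ℝ) : ℂ) := by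
  rw [← mulVec_mulVec, ← mulVec_mulVec, dotProduct_mulVec, ← star_mulVec, dotProduct]
  push_cast
  refine Finset.sum_congr rfl fun i _ => ?_
  rw [mulVec_diagonal, Pi.star_apply, ← Complex.conj_mul']
  simp; ring

lemma mo_unit (x : Fin s → ℂ) (hx : star x ⬝ᵥ x = 1) : ∑ j, ‖x j‖ ^ 2 = 1 := by
  have : star x ⬝ᵥ x = ((∑ j, ‖x j‖ ^ 2 : ℝ) : ℂ) := by
    rw [dotProduct]; push_cast
    refine Finset.sum_congr rfl fun i _ => ?_
    rw [Pi.star_apply, ← Complex.conj_mul']; simp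
  rw [this] at hx
  exact_mod_cast hx

lemma mo_one (hUs : Usᴴ * Us = 1) (x : Fin s → ℂ) (hx : star x ⬝ᵥ x = 1) :
    ∑ i, ‖(Us *ᵥ x) i‖ ^ 2 = 1 := by
  have h := mo_quad Us (fun _ => 1) x
  simp only [Complex.ofReal_one, diagonal_one, Matrix.mul_one, hUs, one_mulVec, hx, one_mul] at h
  exact_mod_cast h.symm

lemma mo_row (x : Fin s → ℂ) (hx : star x ⬝ᵥ x = 1) (i : Fin N) :
    ‖(Us *ᵥ x) i‖ ^ 2 ≤ rowNormSq Us i := by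
  have h1 : ‖(Us *ᵥ x) i‖ ≤ ∑ j, ‖Us i j‖ * ‖x j‖ := by
    rw [mulVec, dotProduct]
    refine (norm_sum_le _ _).trans (Finset.sum_le_sum fun j _ => by rw [norm_mul])
  have h2 := Finset.sum_mul_sq_le_sq_mul_sq Finset.univ (fun j => ‖Us i j‖) (fun j => ‖x j‖)
  rw [mo_unit x hx, mul_one] at h2
  refine le_trans ?_ h2
  gcongr

lemma mo_herm (d : Fin N → ℝ) : (Usᴴ * diagonal (fun i => (d i : ℂ)) * Us).IsHermitian := by
  apply isHermitian_conjTranspose_mul_mul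
  rw [isHermitian_diagonal_iff]
  intro i
  simp [IsSelfAdjoint]

lemma mo_eig {n : Type*} [Fintype n] [DecidableEq n] {A : Matrix n n ℂ} (hA : A.IsHermitian) (i : n) :
    ∃ x : n → ℂ, star x ⬝ᵥ x = 1 ∧ hA.eigenvalues i = (star x ⬝ᵥ A *ᵥ x).re := by
  refine ⟨_, ?_, hA.eigenvalues_eq i⟩
  have := hA.eigenvectorBasis.orthonormal.1 i
  have h2 : inner ℂ (hA.eigenvectorBasis i) (hA.eigenvectorBasis i) = (1 : ℂ) := by
    rw [inner_self_eq_norm_sq_to_K, this]; simp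
  rw [EuclideanSpace.inner_eq_star_dotProduct] at h2
  rw [dotProduct_comm]; exact h2
end MO

lemma mo_sum (nT Q : ℕ) (f : Fin (nT * Q) → ℝ) :
    ∑ i, f i = ∑ k : Fin nT, ∑ t : Fin Q, f (blockIdx nT Q k t) := by
  rw [← finProdFinEquiv.sum_comp, Fintype.sum_prod_type]; rfl

lemma mo_blk (nT Q : ℕ) (k : Fin nT) (t : Fin Q) : blockOf nT Q (blockIdx nT Q k t) = k := by
  simp [blockOf, blockIdx]

end Helpers

/-- Bound II for the energy-harvesting block-transmission model: with
`γ ∈ [0, Q·r_E]`, `p̄ = P(Ē_1 ≥ γ·μ_E) > 0`, for every `r ∈ (0, 1/η_U]`,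
`P(ε < err_II) ≥ 1 − f_bt(μ_II, ϱ_II, r)` where
`err_II = P_x/(1 + (1/σ_w²)(1/Q)·p̄·γ·μ_E·(1/η_U − r))`,
`μ_II = (1/η_L)·max{1/p̄ − 1, 1}·min{Q·η_U, 1}` and
`ϱ_II = (1/η_L²)·(1/p̄ − 1)·min{Q·η_U, 1}`. -/
theorem stmt_1
    {Ω : Type} [MeasureSpace Ω] [IsProbabilityMeasure (ℙ : Measure Ω)]
    (s nT Q : ℕ) (hs : 0 < s) (hnT : 0 < nT) (hQ : 0 < Q) (hsN : s ≤ nT * Q)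
    (Us : Matrix (Fin (nT * Q)) (Fin s) ℂ) (hUs : Usᴴ * Us = 1)
    (ηL ηU : ℝ) (hηL : ηL = ⨅ i, rowNormSq Us i) (hηU : ηU = ⨆ i, rowNormSq Us i)
    (hηLpos : 0 < ηL)
    (Px σw2 : ℝ) (hPx : 0 < Px) (hσ : 0 < σw2)
    (μE ϱE rE : ℝ) (hμE : 0 < μE) (hϱE : 0 < ϱE) (hrE : 1 ≤ rE)
    (E : Fin (nT * Q) → Ω → ℝ) (hEmeas : ∀ i, Measurable (E i))
    (hindep : iIndepFun E ℙ)
    (hident : ∀ i j, IdentDistrib (E i) (E j) ℙ ℙ)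
    (hmean : ∀ i, ∫ ω, E i ω = μE)
    (hvar : ∀ i, variance (E i) ℙ = ϱE)
    (hbdd : ∀ i, ∀ᵐ ω, 0 ≤ E i ω ∧ E i ω ≤ rE * μE)
    (S : Fin nT → ℝ)
    (hS : ∀ k, S k = ∑ t : Fin Q, Px / s * rowNormSq Us (blockIdx nT Q k t))
    (p : Fin nT → Ω → ℝ)
    (hp : ∀ k ω, p k ω = (∑ t : Fin Q, E (blockIdx nT Q k t) ω) / S k)
    (G : Ω → Matrix (Fin (nT * Q)) (Fin (nT * Q)) ℂ)
    (hG : ∀ ω, G ω = Matrix.diagonal fun i => ((p (blockOf nT Q i) ω : ℝ) : ℂ))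
    (ε : Ω → ℝ)
    (hε : ∀ ω, ε ω =
      ((((s / Px : ℝ) : ℂ) • (1 : Matrix (Fin s) (Fin s) ℂ) +
        ((σw2 : ℝ) : ℂ)⁻¹ • (Usᴴ * G ω * Us))⁻¹).trace.re)
    (γ : ℝ) (hγ0 : 0 ≤ γ) (hγ1 : γ ≤ Q * rE)
    (pbar : ℝ)
    (hpbar : pbar =
      (ℙ {ω | γ * μE ≤ ∑ t : Fin Q, E (blockIdx nT Q ⟨0, hnT⟩ t) ω}).toReal)
    (hpbarpos : 0 < pbar)
    (r : ℝ) (hr0 : 0 < r) (hr1 : r ≤ 1 / ηU)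
    (errII μII ϱII : ℝ)
    (herrII : errII = Px / (1 + 1 / σw2 * (1 / Q) * pbar * γ * μE * (1 / ηU - r)))
    (hμII : μII = 1 / ηL * max (1 / pbar - 1) 1 * min (Q * ηU) 1)
    (hϱII : ϱII = 1 / ηL ^ 2 * (1 / pbar - 1) * min (Q * ηU) 1) :
    ENNReal.ofReal (1 - fbt s μII ϱII r) ≤ ℙ {ω | ε ω < errII} := by
  classical
  have hne : Nonempty (Fin s) := ⟨⟨0, hs⟩⟩
  have hneQ : Nonempty (Fin Q) := ⟨⟨0, hQ⟩⟩
  have hneN : Nonempty (Fin (nT * Q)) := ⟨⟨0, Nat.mul_pos hnT hQ⟩⟩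
  have hsR : (0 : ℝ) < s := by exact_mod_cast hs
  have hs1 : (1 : ℝ) ≤ s := by exact_mod_cast hs
  have hQR : (0 : ℝ) < Q := by exact_mod_cast hQ
  have hLle : ∀ i, ηL ≤ rowNormSq Us i := fun i => by
    rw [hηL]; exact ciInf_le (Set.finite_range _).bddBelow i
  have hUle : ∀ i, rowNormSq Us i ≤ ηU := fun i => by
    rw [hηU]; exact le_ciSup (Set.finite_range _).bddAbove i
  have hηUpos : 0 < ηU := lt_of_lt_of_le hηLpos ((hLle ⟨0, Nat.mul_pos hnT hQ⟩).trans (hUle _))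
  have hpbar1 : pbar ≤ 1 := by
    rw [hpbar]
    exact ENNReal.toReal_le_of_le_ofReal zero_le_one (by simpa using prob_le_one)
  -- trivial case
  rcases hpbar1.eq_or_lt with hp1 | hp1
  · have h0 : ϱII = 0 := by rw [hϱII, hp1]; simp
    have : 1 - fbt s μII ϱII r ≤ 0 := by
      rw [h0, fbt]; simp; linarith
    rw [ENNReal.ofReal_of_nonpos this]
    exact zero_le
  have hEnn : ∀ᵐ ω, ∀ i, 0 ≤ E i ω := by
    rw [ae_all_iff]
    intro i
    filter_upwards [hbdd i] with ω h using h.1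
  have hγpos : 0 < γ := by
    rcases hγ0.eq_or_lt with h | h
    · exfalso
      have : ℙ {ω | γ * μE ≤ ∑ t : Fin Q, E (blockIdx nT Q ⟨0, hnT⟩ t) ω} = 1 := by
        have hae : ∀ᵐ ω, ω ∈ {ω | γ * μE ≤ ∑ t : Fin Q, E (blockIdx nT Q ⟨0, hnT⟩ t) ω} := by
          filter_upwards [hEnn] with ω hω
          show γ * μE ≤ _
          rw [← h, zero_mul]
          exact Finset.sum_nonneg fun t _ => hω _
        exact (measure_congr (Filter.eventuallyEq_univ.2 hae)).trans measure_univ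
      rw [this] at hpbar
      simp at hpbar
      linarith
    · exact h
  -- block quantities
  set c : Fin nT → ℝ := fun k => ∑ t : Fin Q, rowNormSq Us (blockIdx nT Q k t) with hc
  have hcL : ∀ k, Q * ηL ≤ c k := fun k => by
    have := Finset.card_nsmul_le_sum (Finset.univ : Finset (Fin Q))
      (fun t => rowNormSq Us (blockIdx nT Q k t)) ηL (fun t _ => hLle _)
    simpa using this
  have hcU : ∀ k, c k ≤ Q * ηU := fun k => by
    have := Finset.sum_le_card_nsmul (Finset.univ : Finset (Fin Q))
      (fun t => rowNormSq Us (blockIdx nT Q k t)) ηU (fun t _ => hUle _)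
    simpa using this
  have hcpos : ∀ k, 0 < c k := fun k => lt_of_lt_of_le (by positivity) (hcL k)
  have hSc : ∀ k, S k = Px / s * c k := fun k => by rw [hS, hc, Finset.mul_sum]
  let d : Fin nT → Fin (nT * Q) → ℝ := fun k i => if blockOf nT Q i = k then 1 else 0
  let A : Fin nT → Matrix (Fin s) (Fin s) ℂ := fun k =>
    Usᴴ * diagonal (fun i => ((d k i : ℝ) : ℂ)) * Us
  have hA : ∀ k, (A k).IsHermitian := fun k => mo_herm Us (d k)
  have hq : ∀ x k, (star x ⬝ᵥ A k *ᵥ x).re = ∑ t, ‖(Us *ᵥ x) (blockIdx nT Q k t)‖ ^ 2 := by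
    intro x k
    rw [mo_quad, Complex.ofReal_re, mo_sum, Finset.sum_eq_single k]
    · refine Finset.sum_congr rfl fun t _ => ?_
      simp [d, mo_blk]
    · intro k' _ hk'
      apply Finset.sum_eq_zero
      intro t _
      simp [d, mo_blk, hk']
    · simp
  have hqnn : ∀ x k, 0 ≤ (star x ⬝ᵥ A k *ᵥ x).re := fun x k => by
    rw [hq]; positivity
  have hqsum : ∀ x : Fin s → ℂ, star x ⬝ᵥ x = 1 → ∑ k, (star x ⬝ᵥ A k *ᵥ x).re = 1 := by
    intro x hx
    simp only [hq]
    rw [← mo_sum nT Q (fun i => ‖(Us *ᵥ x) i‖ ^ 2)]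
    exact mo_one Us hUs x hx
  have hqc : ∀ x : Fin s → ℂ, star x ⬝ᵥ x = 1 → ∀ k, (star x ⬝ᵥ A k *ᵥ x).re ≤ c k := by
    intro x hx k
    rw [hq]
    exact Finset.sum_le_sum fun t _ => mo_row Us x hx _
  set M := min (Q * ηU) 1 with hM
  have hMpos : 0 < M := lt_min (by positivity) one_pos
  have hev : ∀ k i, 0 ≤ (hA k).eigenvalues i ∧ (hA k).eigenvalues i ≤ M := by
    intro k i
    obtain ⟨x, hx, he⟩ := mo_eig (hA k) i
    rw [he]
    refine ⟨hqnn x k, le_min ((hqc x hx k).trans (hcU k)) ?_⟩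
    rw [← hqsum x hx]
    exact Finset.single_le_sum (f := fun k => (star x ⬝ᵥ A k *ᵥ x).re)
      (fun k _ => hqnn x k) (Finset.mem_univ k)
  set κ : Fin nT → ℝ := fun k => Q / c k with hκd
  have hκ0 : ∀ k, 0 < κ k := fun k => div_pos hQR (hcpos k)
  have hκ : ∀ k, κ k ≤ 1 / ηL := fun k => by
    rw [hκd]
    simp only
    rw [div_le_div_iff₀ (hcpos k) hηLpos, one_mul]; exact hcL k
  have hκL : ∀ k, 1 / ηU ≤ κ k := fun k => by
    rw [hκd]
    simp only
    rw [div_le_div_iff₀ hηUpos (hcpos k), one_mul]; exact hcU k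
  let ξ : Bool → ℝ := fun b => if b then 1 / pbar - 1 else -1
  let w : Bool → ℝ := fun b => if b then pbar else 1 - pbar
  let Bad : Finset (Fin nT → Bool) := Finset.univ.filter fun v => ∃ x : Fin s → ℂ,
    star x ⬝ᵥ x = 1 ∧ ∑ k, κ k * ξ (v k) * (star x ⬝ᵥ A k *ᵥ x).re ≤ -r
  have hμle : 1 / ηL * M ≤ μII := by
    rw [hμII]
    have h1 : 1 ≤ max (1 / pbar - 1) 1 := le_max_right _ _
    have h2 : 0 < 1 / ηL := by positivity
    calc 1 / ηL * M = 1 / ηL * 1 * M := by ring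
      _ ≤ _ := by gcongr
  have hbe := be_main nT A hA M hMpos hev κ (1 / ηL) (by positivity) hκ0 hκ
    (fun x hx => (hqsum x hx).le) hqnn pbar hpbarpos hp1 μII ϱII r hμle
    (by rw [hϱII]; ring) hr0 ξ (by simp [ξ]) (by simp [ξ]) w (by simp [w]) (by simp [w]) Bad
    (fun v hv => (Finset.mem_filter.1 hv).2)
  let δ : Ω → Fin nT → Bool := fun ω k =>
    decide (γ * μE ≤ ∑ t : Fin Q, E (blockIdx nT Q k t) ω)
  have hδ : ∀ ω k, δ ω k = true ↔ γ * μE ≤ ∑ t : Fin Q, E (blockIdx nT Q k t) ω := by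
    intro ω k; simp [δ]
  obtain ⟨hmeas, hprob⟩ := pr_main nT Q hnT E hEmeas hindep hident (γ * μE) pbar hpbar w
    (by simp [w]) (by simp [w]) δ hδ Bad
  have hsub : {ω | δ ω ∈ Bad}ᶜ ≤ᵐ[ℙ] {ω | ε ω < errII} := by
    filter_upwards [hEnn] with ω hω hωB
    have hωB' : ¬ (δ ω ∈ Bad) := hωB
    have hgood : ∀ x : Fin s → ℂ, star x ⬝ᵥ x = 1 →
        -r < ∑ k, κ k * ξ (δ ω k) * (star x ⬝ᵥ A k *ᵥ x).re := by
      intro x hx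
      by_contra hcon
      exact hωB' (Finset.mem_filter.2 ⟨Finset.mem_univ _, x, hx, not_lt.1 hcon⟩)
    show ε ω < errII
    set D := 1 + 1 / σw2 * (1 / Q) * pbar * γ * μE * (1 / ηU - r) with hD
    have hDpos : 0 < D := by
      have : 0 ≤ 1 / ηU - r := by linarith
      have : 0 ≤ 1 / σw2 * (1 / Q) * pbar * γ * μE * (1 / ηU - r) := by positivity
      linarith
    have hNh : ((((s / Px : ℝ) : ℂ) • (1 : Matrix (Fin s) (Fin s) ℂ) +
        ((σw2 : ℝ) : ℂ)⁻¹ • (Usᴴ * G ω * Us))).IsHermitian := by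
      rw [hG]
      exact (isHermitian_one.smul (by simp [IsSelfAdjoint])).add
        ((mo_herm Us (fun i => p (blockOf nT Q i) ω)).smul (by simp [IsSelfAdjoint]))
    have hfin := sp_inv hNh (s / Px * D) (by positivity) ?_
    · rw [hε, herrII]
      refine lt_of_lt_of_eq hfin ?_
      rw [Fintype.card_fin]
      field_simp
    · intro x hx
      have hG2 : (star x ⬝ᵥ (Usᴴ * G ω * Us) *ᵥ x) =
          ((∑ k, p k ω * (star x ⬝ᵥ A k *ᵥ x).re : ℝ) : ℂ) := by
        rw [hG, mo_quad Us (fun i => p (blockOf nT Q i) ω), mo_sum]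
        congr 1
        refine Finset.sum_congr rfl fun k _ => ?_
        rw [hq, Finset.mul_sum]
        refine Finset.sum_congr rfl fun t _ => ?_
        rw [mo_blk]
      rw [add_mulVec, dotProduct_add, smul_mulVec, smul_mulVec, dotProduct_smul, dotProduct_smul,
        one_mulVec, hx, hG2, smul_eq_mul, smul_eq_mul, mul_one, ← Complex.ofReal_inv,
        ← Complex.ofReal_mul, ← Complex.ofReal_add, Complex.ofReal_re]
      have hpk : ∀ k, s / Px * (γ * μE * pbar / Q) * (κ k * (1 + ξ (δ ω k))) ≤ p k ω := by
        intro k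
        rw [hp, hSc]
        have hsum0 : 0 ≤ ∑ t : Fin Q, E (blockIdx nT Q k t) ω :=
          Finset.sum_nonneg fun t _ => hω _
        have hck := hcpos k
        cases hb : δ ω k
        · have : ξ false = -1 := by simp [ξ]
          rw [this]
          simp only [add_neg_cancel, mul_zero]
          positivity
        · have h1 : ξ true = 1 / pbar - 1 := by simp [ξ]
          have h2 := (hδ ω k).1 hb
          rw [h1]
          have e : s / Px * (γ * μE * pbar / Q) * (κ k * (1 + (1 / pbar - 1))) =
              (γ * μE) / (Px / s * c k) := by
            rw [hκd]; field_simp; ring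
          rw [e]
          gcongr
      have h1 : s / Px * (γ * μE * pbar / Q) * (∑ k, (κ k * (1 + ξ (δ ω k))) *
          (star x ⬝ᵥ A k *ᵥ x).re) ≤ ∑ k, p k ω * (star x ⬝ᵥ A k *ᵥ x).re := by
        rw [Finset.mul_sum]
        refine Finset.sum_le_sum fun k _ => ?_
        rw [← mul_assoc]
        exact mul_le_mul_of_nonneg_right (hpk k) (hqnn x k)
      have h2 : 1 / ηU - r < ∑ k, (κ k * (1 + ξ (δ ω k))) * (star x ⬝ᵥ A k *ᵥ x).re := by
        have e : ∑ k, (κ k * (1 + ξ (δ ω k))) * (star x ⬝ᵥ A k *ᵥ x).re =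
            ∑ k, κ k * (star x ⬝ᵥ A k *ᵥ x).re +
              ∑ k, κ k * ξ (δ ω k) * (star x ⬝ᵥ A k *ᵥ x).re := by
          rw [← Finset.sum_add_distrib]
          exact Finset.sum_congr rfl fun k _ => by ring
        have h3 : 1 / ηU ≤ ∑ k, κ k * (star x ⬝ᵥ A k *ᵥ x).re := by
          calc 1 / ηU = ∑ k, 1 / ηU * (star x ⬝ᵥ A k *ᵥ x).re := by
                rw [← Finset.mul_sum, hqsum x hx, mul_one]
            _ ≤ _ := Finset.sum_le_sum fun k _ =>
                mul_le_mul_of_nonneg_right (hκL k) (hqnn x k)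
        have := hgood x hx
        rw [e]; linarith
      have h4 : s / Px * (γ * μE * pbar / Q) * (1 / ηU - r) <
          ∑ k, p k ω * (star x ⬝ᵥ A k *ᵥ x).re :=
        lt_of_lt_of_le (mul_lt_mul_of_pos_left h2 (by positivity)) h1
      have h5 := mul_lt_mul_of_pos_left h4 (inv_pos.2 hσ)
      have h6 : s / Px * D = s / Px +
          σw2⁻¹ * (s / Px * (γ * μE * pbar / Q) * (1 / ηU - r)) := by
        rw [hD]; ring
      rw [h6]
      linarith
  have hcompl : ℙ ({ω | δ ω ∈ Bad}ᶜ : Set Ω) = 1 - ℙ {ω | δ ω ∈ Bad} :=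
    prob_compl_eq_one_sub hmeas
  refine le_trans ?_ (le_trans hcompl.ge (measure_mono_ae hsub))
  have hPle : ℙ {ω | δ ω ∈ Bad} ≤ ENNReal.ofReal (fbt s μII ϱII r) := by
    rw [← ENNReal.ofReal_toReal (measure_ne_top ℙ {ω | δ ω ∈ Bad})]
    apply ENNReal.ofReal_le_ofReal
    rw [hprob]
    refine hbe.trans ?_
    rw [Fintype.card_fin, fbt]
    have := Real.exp_nonneg (-(ϱII / μII ^ 2) * hfun (μII * r / ϱII))
    nlinarith
  have hf0 : 0 ≤ fbt s μII ϱII r := by unfold fbt; positivity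
  rw [ENNReal.ofReal_sub _ hf0, ENNReal.ofReal_one]
  gcongr
end

section
/- Consider the off-line equidistant sample transmission problem for low-pass c.w.s.s. signals: minimize ε̄(B) = tr[((s/P_x)·I_s + (1/σ_w²)·U_s† B U_s)^{−1}] over N×N diagonal matrices B = diag(b_1,…,b_N) with b_t ≥ 0 if t = Q(k−1) + t_d + 1 for some k ∈ {1,…,s} and b_t = 0 otherwise, subject to Σ_{t=1}^{N} b_t·σ_{x,t}² = E_tot. Then the allocation b_t = (E_tot/P_x)·(N/s) at the supported indices t = Q(k−1)+t_d+1 (and b_t = 0 otherwise) is feasible and optimal, and the minimum value equals ε_{de} = P_x / (1 + E_tot/(s·σ_w²)). -/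
open Matrix Finset

/-- The `n×n` DFT matrix, `[F^n]_{tk} = (1/√n)·exp(−j·(2π/n)·(t−1)(k−1))` (0-based indices). -/
noncomputable def dftMatrix (n : ℕ) : Matrix (Fin n) (Fin n) ℂ :=
  Matrix.of fun t k =>
    (1 / (Real.sqrt n : ℂ)) *
      Complex.exp (-Complex.I * ((2 * Real.pi / n : ℝ) : ℂ) * (t.1 : ℂ) * (k.1 : ℂ))

/-- The (0-based) index `Q·k + t_d` inside `Fin (s·Q)`. -/
def posIdx (s Q : ℕ) (td : Fin Q) (k : Fin s) : Fin (s * Q) := finProdFinEquiv (k, td)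

lemma aux_geom (s : ℕ) (hs : 0 < s) (k l : Fin s) :
    ∑ j : Fin s, Complex.exp (-Complex.I * (2 * Real.pi / s) * ((k.1:ℂ) - l.1)) ^ j.1
      = if k = l then (s:ℂ) else 0 := by
  have hs0 : (s:ℂ) ≠ 0 := by exact_mod_cast hs.ne'
  split_ifs with h
  · subst h; simp
  · rw [Fin.sum_univ_eq_sum_range (fun j => Complex.exp (-Complex.I * (2 * Real.pi / s) * ((k.1:ℂ) - l.1)) ^ j) s]
    set ω := Complex.exp (-Complex.I * (2 * Real.pi / s) * ((k.1:ℂ) - l.1)) with hω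
    have h1 : ω ≠ 1 := by
      intro h1
      rw [hω, Complex.exp_eq_one_iff] at h1
      obtain ⟨n, hn⟩ := h1
      have hpi : (Real.pi : ℂ) ≠ 0 := by exact_mod_cast Real.pi_ne_zero
      have h2 : ((l.1:ℂ) - k.1) = n * s := by
        field_simp at hn
        linear_combination hn
      have h3 : ((l.1:ℤ) - k.1) = n * s := by exact_mod_cast h2
      have hk := k.2
      have hl := l.2
      have hn0 : n = 0 := by
        by_contra hne
        rcases lt_or_gt_of_ne hne with h | h <;> nlinarith
      subst hn0
      apply h
      ext
      omega
    have h2 : ω ^ s = 1 := by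
      rw [hω, ← Complex.exp_nat_mul, Complex.exp_eq_one_iff]
      refine ⟨(l.1:ℤ) - k.1, ?_⟩
      push_cast
      field_simp
      ring
    rw [geom_sum_eq h1, h2]; simp

lemma aux_orth (s Q : ℕ) (hs : 0 < s) (hQ : 0 < Q) (td : Fin Q)
    (V : Matrix (Fin s) (Fin s) ℂ)
    (hV : ∀ k j, V k j = dftMatrix (s * Q) (posIdx s Q td k)
      ⟨j.1, lt_of_lt_of_le j.2 (Nat.le_mul_of_pos_right s hQ)⟩) :
    (Q:ℂ) • (V * Vᴴ) = 1 := by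
  have hs0 : (s:ℂ) ≠ 0 := by exact_mod_cast hs.ne'
  have hQ0 : (Q:ℂ) ≠ 0 := by exact_mod_cast hQ.ne'
  ext k l
  have key : ∀ j, V k j * star (V l j) = (1 / (s * Q : ℂ)) *
      Complex.exp (-Complex.I * (2 * Real.pi / s) * ((k.1:ℂ) - l.1)) ^ j.1 := by
    intro j
    have hsq : ((Real.sqrt ((s * Q : ℕ):ℝ) : ℝ) : ℂ) * ((Real.sqrt ((s * Q : ℕ):ℝ) : ℝ) : ℂ) = s * Q := by
      rw [← Complex.ofReal_mul, Real.mul_self_sqrt (by positivity)]; push_cast; rfl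
    rw [hV, hV]
    simp only [dftMatrix, posIdx, Matrix.of_apply, finProdFinEquiv_apply_val, Complex.star_def,
      map_mul, map_div₀, map_one, Complex.conj_ofReal, ← Complex.exp_conj, map_neg, Complex.conj_I, map_natCast]
    rw [mul_mul_mul_comm, ← Complex.exp_add, ← Complex.exp_nat_mul, div_mul_div_comm, hsq, one_mul]
    congr 2
    push_cast
    field_simp
    ring
  rw [Matrix.smul_apply, Matrix.mul_apply]
  simp only [Matrix.conjTranspose_apply, key]
  rw [← Finset.mul_sum, aux_geom s hs, Matrix.one_apply]
  split_ifs
  · simp; field_simp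
  · simp

lemma aux_trace (s Q : ℕ) (hQ : 0 < Q)
    (V : Matrix (Fin s) (Fin s) ℂ) (hV : (Q:ℂ) • (V * Vᴴ) = 1)
    (a σ : ℝ) (ha : 0 < a) (hσ : 0 < σ) (c : Fin s → ℝ) (hc : ∀ k, 0 ≤ c k) :
    (((a : ℂ) • (1 : Matrix (Fin s) (Fin s) ℂ) + (σ : ℂ)⁻¹ •
      (Vᴴ * Matrix.diagonal (fun t => ((c t : ℝ) : ℂ)) * V))⁻¹).trace.re
      = ∑ k, 1 / (a + c k / (Q * σ)) := by
  have hQ0 : (Q:ℂ) ≠ 0 := by exact_mod_cast hQ.ne'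
  have hσ0 : (σ:ℂ) ≠ 0 := by exact_mod_cast hσ.ne'
  have hQr : (0:ℝ) < Q := by exact_mod_cast hQ
  have hV' : (Q:ℂ) • (Vᴴ * V) = 1 := by
    rw [← Matrix.smul_mul]
    rw [← Matrix.mul_smul] at hV
    exact mul_eq_one_comm.mp hV
  set d : Fin s → ℝ := fun k => a + c k / (Q * σ) with hd
  have hdpos : ∀ k, 0 < d k := fun k => by have := hc k; simp only [hd]; positivity
  have hM : (a : ℂ) • (1 : Matrix (Fin s) (Fin s) ℂ) + (σ : ℂ)⁻¹ •
      (Vᴴ * Matrix.diagonal (fun t => ((c t : ℝ) : ℂ)) * V)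
      = (Q:ℂ) • (Vᴴ * Matrix.diagonal (fun t => ((d t : ℝ) : ℂ)) * V) := by
    have : Matrix.diagonal (fun t => ((d t : ℝ) : ℂ)) = (a:ℂ) • (1 : Matrix (Fin s) (Fin s) ℂ)
        + ((Q:ℂ) * σ)⁻¹ • Matrix.diagonal (fun t => ((c t : ℝ) : ℂ)) := by
      ext i j
      by_cases h : i = j
      · subst h; simp [hd]; field_simp
      · simp [h]
    rw [this, Matrix.mul_add, Matrix.add_mul, smul_add]
    congr 1
    · rw [Matrix.mul_smul, Matrix.mul_one, Matrix.smul_mul, smul_comm, hV']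
    · simp only [Matrix.mul_smul, Matrix.smul_mul, smul_smul]
      congr 1
      field_simp
  have hinv : ((Q:ℂ) • (Vᴴ * Matrix.diagonal (fun t => ((d t : ℝ) : ℂ)) * V))⁻¹
      = (Q:ℂ) • (Vᴴ * Matrix.diagonal (fun t => (((d t)⁻¹ : ℝ) : ℂ)) * V) := by
    apply Matrix.inv_eq_right_inv
    calc _ = (Q:ℂ) • (Vᴴ * (Matrix.diagonal (fun t => ((d t : ℝ) : ℂ)) * ((Q:ℂ) • (V * Vᴴ)) * Matrix.diagonal (fun t => (((d t)⁻¹ : ℝ) : ℂ))) * V) := by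
          simp only [Matrix.mul_smul, Matrix.smul_mul, Matrix.mul_assoc]
      _ = (Q:ℂ) • (Vᴴ * V) := by
          rw [hV, Matrix.mul_one, Matrix.diagonal_mul_diagonal]
          have : (fun t => ((d t : ℝ) : ℂ) * (((d t)⁻¹ : ℝ) : ℂ)) = fun _ => 1 := by
            funext t
            rw [← Complex.ofReal_mul, mul_inv_cancel₀ (hdpos t).ne']; simp
          rw [this, Matrix.diagonal_one, Matrix.mul_one]
      _ = 1 := hV'
  rw [hM, hinv, Matrix.mul_assoc, Matrix.trace_smul, Matrix.trace_mul_comm, Matrix.mul_assoc,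
    ← Matrix.trace_smul, ← Matrix.mul_smul, hV, Matrix.mul_one, Matrix.trace_diagonal,
    ← Complex.ofReal_sum, Complex.ofReal_re]
  simp [hd]

lemma aux_sum (s Q : ℕ) (td : Fin Q) {M : Type*} [AddCommMonoid M] (f : Fin (s * Q) → M)
    (hf : ∀ i, (¬ ∃ k : Fin s, i = posIdx s Q td k) → f i = 0) :
    ∑ i, f i = ∑ k, f (posIdx s Q td k) := by
  have hinj : Function.Injective (posIdx s Q td) := by
    intro k l h
    have := finProdFinEquiv.injective h
    exact (Prod.mk.inj this).1
  symm
  apply Fintype.sum_of_injective _ hinj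
  · intro i hi
    apply hf
    rintro ⟨k, rfl⟩
    exact hi ⟨k, rfl⟩
  · simp

/-- Off-line equidistant sample transmission for low-pass c.w.s.s. signals: among diagonal `B`
supported on the positions `t = Q(k−1)+t_d+1` with nonnegative entries and total energy
`Σ_t b_t σ_{x,t}² = E_tot`, the allocation `b_t = (E_tot/P_x)·(N/s)` on the support is feasible
and optimal, with minimum value `P_x/(1 + E_tot/(s·σ_w²))`. -/
theorem stmt_5 (s Q : ℕ) (hs : 0 < s) (hQ : 0 < Q) (td : Fin Q)
    (Us : Matrix (Fin (s * Q)) (Fin s) ℂ)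
    (hUs : ∀ (i : Fin (s * Q)) (j : Fin s),
      Us i j = dftMatrix (s * Q) i ⟨j.1, lt_of_lt_of_le j.2 (Nat.le_mul_of_pos_right s hQ)⟩)
    (Px σw2 Etot : ℝ) (hPx : 0 < Px) (hσ : 0 < σw2) (hEtot : 0 ≤ Etot)
    (σx2 : Fin (s * Q) → ℝ) (hσx2 : ∀ i, σx2 i = Px / s * rowNormSq Us i)
    (errBar : (Fin (s * Q) → ℝ) → ℝ)
    (herrBar : ∀ b : Fin (s * Q) → ℝ, errBar b =
      ((((s / Px : ℝ) : ℂ) • (1 : Matrix (Fin s) (Fin s) ℂ) +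
        ((σw2 : ℝ) : ℂ)⁻¹ • (Usᴴ * Matrix.diagonal (fun t => ((b t : ℝ) : ℂ)) * Us))⁻¹).trace.re)
    (b0 : Fin (s * Q) → ℝ)
    (hb0 : ∀ i : Fin (s * Q),
      b0 i = if ∃ k : Fin s, i = posIdx s Q td k then Etot / Px * ((s * Q : ℕ) : ℝ) / s else 0) :
    ((∀ i, 0 ≤ b0 i) ∧ (∑ i, b0 i * σx2 i = Etot) ∧
      errBar b0 = Px / (1 + Etot / (s * σw2))) ∧
    (∀ b : Fin (s * Q) → ℝ,
      (∀ i, 0 ≤ b i) → (∀ i, (¬ ∃ k : Fin s, i = posIdx s Q td k) → b i = 0) →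
      (∑ i, b i * σx2 i = Etot) →
      Px / (1 + Etot / (s * σw2)) ≤ errBar b) := by
  have hsr : (0:ℝ) < s := by exact_mod_cast hs
  have hQr : (0:ℝ) < Q := by exact_mod_cast hQ
  have hrow : ∀ i, σx2 i = Px / (s * Q) := by
    intro i
    have : ∀ j, ‖Us i j‖ ^ 2 = 1 / (s * Q : ℝ) := by
      intro j
      rw [hUs]
      simp only [dftMatrix, Matrix.of_apply]
      rw [norm_mul, Complex.norm_exp, mul_pow, norm_div, Complex.norm_real]
      have h1 : (-Complex.I * ((2 * Real.pi / (s * Q : ℕ) : ℝ) : ℂ) * ((i.1 : ℕ) : ℂ) * ((j.1 : ℕ) : ℂ)).re = 0 := by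
        rw [show (-Complex.I * ((2 * Real.pi / (s * Q : ℕ) : ℝ) : ℂ) * ((i.1 : ℕ) : ℂ) * ((j.1 : ℕ) : ℂ))
          = (((2 * Real.pi / (s * Q : ℕ) : ℝ) * i.1 * j.1 : ℝ) : ℂ) * -Complex.I by push_cast; ring]
        rw [Complex.re_ofReal_mul]; simp
      rw [h1, div_pow, Real.norm_eq_abs, sq_abs, Real.sq_sqrt (by positivity)]
      simp
    rw [hσx2, rowNormSq, Finset.sum_congr rfl (fun j _ => this j)]
    simp
    field_simp
  set V : Matrix (Fin s) (Fin s) ℂ := Matrix.of fun k j => Us (posIdx s Q td k) j with hVdef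
  have hV : (Q:ℂ) • (V * Vᴴ) = 1 := aux_orth s Q hs hQ td V (fun k j => by simp [hVdef, hUs])
  have herr : ∀ b : Fin (s * Q) → ℝ, (∀ i, 0 ≤ b i) →
      (∀ i, (¬ ∃ k : Fin s, i = posIdx s Q td k) → b i = 0) →
      errBar b = ∑ k, 1 / (s / Px + b (posIdx s Q td k) / (Q * σw2)) := by
    intro b hb hb'
    rw [herrBar, ← aux_trace s Q hQ V hV (s / Px) σw2 (by positivity) hσ
      (fun k => b (posIdx s Q td k)) (fun k => hb _)]
    have : Usᴴ * Matrix.diagonal (fun t => ((b t : ℝ) : ℂ)) * Us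
        = Vᴴ * Matrix.diagonal (fun k => ((b (posIdx s Q td k) : ℝ) : ℂ)) * V := by
      ext i j
      rw [Matrix.mul_apply, Matrix.mul_apply]
      simp only [Matrix.mul_diagonal, Matrix.conjTranspose_apply]
      rw [aux_sum s Q td]
      · simp [hVdef]
      · intro i hi; simp [hb' i hi]
    rw [this]
  have hb0n : ∀ i, 0 ≤ b0 i := by
    intro i; rw [hb0]; split_ifs <;> positivity
  have hb0z : ∀ i, (¬ ∃ k : Fin s, i = posIdx s Q td k) → b0 i = 0 := by
    intro i hi; rw [hb0, if_neg hi]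
  have hb0p : ∀ k, b0 (posIdx s Q td k) = Etot / Px * Q := by
    intro k
    rw [hb0, if_pos ⟨k, rfl⟩]
    push_cast
    field_simp
  refine ⟨⟨hb0n, ?_, ?_⟩, ?_⟩
  · rw [aux_sum s Q td _ (fun i hi => by rw [hb0z i hi, zero_mul])]
    simp only [hb0p, hrow, Finset.sum_const, Finset.card_univ, Fintype.card_fin, nsmul_eq_mul]
    field_simp
  · rw [herr b0 hb0n hb0z]
    simp only [hb0p, Finset.sum_const, Finset.card_univ, Fintype.card_fin, nsmul_eq_mul]
    field_simp
  · intro b hb hbz hsum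
    rw [herr b hb hbz]
    rw [aux_sum s Q td _ (fun i hi => by rw [hbz i hi, zero_mul])] at hsum
    simp only [hrow] at hsum
    rw [← Finset.sum_mul] at hsum
    have hS : ∑ k, b (posIdx s Q td k) = Etot * (s * Q) / Px := by
      rw [← hsum]; field_simp
    have hd : ∑ k : Fin s, (s / Px + b (posIdx s Q td k) / (Q * σw2)) = s ^ 2 / Px + Etot * s / (Px * σw2) := by
      rw [Finset.sum_add_distrib, ← Finset.sum_div, ← Finset.sum_div, hS]
      simp
      field_simp
    have hpos : ∀ k : Fin s, 0 < s / Px + b (posIdx s Q td k) / (Q * σw2) := by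
      intro k
      have := hb (posIdx s Q td k)
      positivity
    have hcs := Finset.sum_sq_le_sum_mul_sum_of_sq_le_mul (Finset.univ : Finset (Fin s))
      (r := fun _ => (1:ℝ)) (f := fun k => s / Px + b (posIdx s Q td k) / (Q * σw2))
      (g := fun k => 1 / (s / Px + b (posIdx s Q td k) / (Q * σw2)))
      (fun k _ => (hpos k).le) (fun k _ => (one_div_pos.mpr (hpos k)).le)
      (fun k _ => by rw [mul_one_div_cancel (hpos k).ne']; norm_num)
    rw [hd] at hcs
    simp only [Finset.sum_const, Finset.card_univ, Fintype.card_fin, nsmul_eq_mul, mul_one] at hcs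
    have hD : 0 < s ^ 2 / Px + Etot * s / (Px * σw2) := by positivity
    rw [show Px / (1 + Etot / (s * σw2)) = s ^ 2 / (s ^ 2 / Px + Etot * s / (Px * σw2)) by
      field_simp]
    rw [div_le_iff₀ hD, mul_comm]
    exact hcs
end
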